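/- arXiv:1402.0182 — 4 statements merged into one kernel-verified Lean document; each statement's English description precedes it below -/
import Mathlib

section
/- Let α, β, λ > 0 and let f be the EEP(α,β,λ) density. Then ∫₀^∞ f(x) dx = 1, i.e. f is a probability density on (0,∞). -/
/-!
On `(0, ∞)` the density is the derivative of
`F x = (1 - exp (-λ (1 - exp (-β x)) ^ α)) / (1 - exp (-λ))` (`eepCdf`), which is continuous on
`[0, ∞)`, vanishes at `0` and tends to `1` at infinity. Since the density is nonnegative, the
fundamental theorem of calculus on a half-line gives integrability and the value `1 - 0` at once.
For `α < 1` the density may blow up at `0`, so only continuity of `F` is used there.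
-/

open Real MeasureTheory Set

/-- The EEP(α,β,λ) probability density function. -/
noncomputable def eepPdf (α β lam : ℝ) (x : ℝ) : ℝ :=
  if 0 < x then
    (α * β * lam / (1 - Real.exp (-lam))) * Real.exp (-β * x) *
      (1 - Real.exp (-β * x)) ^ (α - 1) *
      Real.exp (-lam * (1 - Real.exp (-β * x)) ^ α)
  else 0

/-- The closed form of the EEP(α,β,λ) distribution function, meaningful for `0 ≤ x`; for `x < 0`
the real power has a negative base and the value is not the distribution function. -/
noncomputable def eepCdf (α β lam : ℝ) (x : ℝ) : ℝ :=
  (1 - Real.exp (-lam * (1 - Real.exp (-β * x)) ^ α)) / (1 - Real.exp (-lam))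

lemma one_sub_exp_neg_mul_pos {β x : ℝ} (hβ : 0 < β) (hx : 0 < x) :
    0 < 1 - Real.exp (-β * x) := by
  have h : Real.exp (-β * x) < 1 := Real.exp_zero ▸ Real.exp_lt_exp.mpr (by nlinarith [mul_pos hβ hx])
  linarith

lemma continuous_eepCdf {α : ℝ} (β lam : ℝ) (hα : 0 < α) : Continuous (eepCdf α β lam) := by
  have h : Continuous fun x : ℝ => (1 - Real.exp (-β * x)) ^ α :=
    Continuous.rpow_const (by fun_prop) fun _ => Or.inr hα.le
  unfold eepCdf
  fun_prop

lemma hasDerivAt_eepCdf (α : ℝ) {β : ℝ} (lam : ℝ) (hβ : 0 < β) {x : ℝ} (hx : 0 < x) :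
    HasDerivAt (eepCdf α β lam) (eepPdf α β lam x) x := by
  have hpos := one_sub_exp_neg_mul_pos hβ hx
  have h₁ : HasDerivAt (fun y : ℝ => 1 - Real.exp (-β * y)) (-(Real.exp (-β * x) * (-β * 1))) x :=
    (((hasDerivAt_id' x).const_mul (-β)).exp).const_sub 1
  have h₂ := h₁.rpow_const (p := α) (Or.inl hpos.ne')
  have h₃ := (((h₂.const_mul (-lam)).exp).const_sub 1).div_const (1 - Real.exp (-lam))
  refine h₃.congr_deriv ?_
  rw [eepPdf, if_pos hx]
  ring

lemma eepPdf_nonneg {α β lam : ℝ} (hα : 0 < α) (hβ : 0 < β) (hlam : 0 < lam) (x : ℝ) :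
    0 ≤ eepPdf α β lam x := by
  unfold eepPdf
  split_ifs with hx
  · have h₁ := one_sub_exp_neg_mul_pos hβ hx
    have h₂ : 0 < 1 - Real.exp (-lam) := by
      simpa using one_sub_exp_neg_mul_pos hlam one_pos
    positivity
  · exact le_rfl

lemma tendsto_eepCdf_atTop {α β lam : ℝ} (hβ : 0 < β) (hlam : 0 < lam) :
    Filter.Tendsto (eepCdf α β lam) Filter.atTop (nhds 1) := by
  have hD : 1 - Real.exp (-lam) ≠ 0 := by
    simpa using (one_sub_exp_neg_mul_pos hlam one_pos).ne'
  have h₁ : Filter.Tendsto (fun x : ℝ => Real.exp (-β * x)) Filter.atTop (nhds 0) :=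
    Real.tendsto_exp_atBot.comp
      (Filter.tendsto_id.const_mul_atTop_of_neg (neg_lt_zero.mpr hβ))
  have h₂ : Filter.Tendsto (fun x : ℝ => (1 - Real.exp (-β * x)) ^ α) Filter.atTop (nhds 1) := by
    simpa using (h₁.const_sub 1).rpow_const (p := α) (Or.inl (by norm_num))
  have h₃ := ((((Real.continuous_exp.tendsto _).comp (h₂.const_mul (-lam))).const_sub 1).div_const
    (1 - Real.exp (-lam)))
  rw [mul_one, div_self hD] at h₃
  exact h₃

lemma eepCdf_zero {α : ℝ} (β lam : ℝ) (hα : 0 < α) : eepCdf α β lam 0 = 0 := by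
  simp [eepCdf, Real.zero_rpow hα.ne']

theorem eep_pdf_integrates_to_one (α β lam : ℝ)
    (hα : 0 < α) (hβ : 0 < β) (hlam : 0 < lam) :
    ∫ x in Set.Ioi (0 : ℝ), eepPdf α β lam x = 1 := by
  rw [integral_Ioi_of_hasDerivAt_of_nonneg (continuous_eepCdf β lam hα).continuousWithinAt
    (fun x hx => hasDerivAt_eepCdf α lam hβ hx) (fun x _ => eepPdf_nonneg hα hβ hlam x)
    (tendsto_eepCdf_atTop hβ hlam), eepCdf_zero β lam hα, sub_zero]
end

section
/- Let α, β, λ > 0 and let f be the EEP(α,β,λ) density. Then for every real t, the characteristic function satisfies ∫₀^∞ e^{itx} f(x) dx = (αλ/(1−e^{−λ})) · ∫₀^1 (1−u)^{−it/β} u^{α−1} e^{−λ u^α} du, where the right-hand integrand uses the principal power (1−u)^{−it/β} = exp(−(it/β)·log(1−u)). -/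
/-!
The identity is the change of variables `u = 1 - e^{-βx}`, a bijection of `(0, ∞)` onto `(0, 1)`
with derivative `β e^{-βx}`. Since `log (1 - u) = -βx`, the principal power `(1 - u)^{-it/β}`
becomes `e^{itx}`. The change of variables formula for injective maps needs no integrability
hypothesis, so integrability is never checked.
-/

open Real MeasureTheory Set Complex

theorem eep_image_Ioi {β : ℝ} (hβ : 0 < β) :
    (fun x : ℝ => 1 - Real.exp (-β * x)) '' Set.Ioi 0 = Set.Ioo 0 1 := by
  ext u
  simp only [Set.mem_image, Set.mem_Ioi, Set.mem_Ioo]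
  constructor
  · rintro ⟨x, hx, rfl⟩
    have h1 : Real.exp (-β * x) < 1 := Real.exp_lt_one_iff.mpr (by nlinarith [mul_pos hβ hx])
    have h2 := Real.exp_pos (-β * x)
    constructor <;> linarith
  · rintro ⟨h0, h1⟩
    refine ⟨-Real.log (1 - u) / β, div_pos ?_ hβ, ?_⟩
    · linarith [Real.log_neg (show 0 < 1 - u by linarith) (by linarith)]
    · have h : -β * (-Real.log (1 - u) / β) = Real.log (1 - u) := by field_simp
      rw [h, Real.exp_log (by linarith)]
      ring

theorem eep_charfun_integral_form (α β lam : ℝ)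
    (hα : 0 < α) (hβ : 0 < β) (hlam : 0 < lam) (t : ℝ) :
    ∫ x in Set.Ioi (0 : ℝ),
        Complex.exp (Complex.I * t * x) * (eepPdf α β lam x : ℂ) =
      ((α * lam / (1 - Real.exp (-lam)) : ℝ) : ℂ) *
        ∫ u in Set.Ioo (0 : ℝ) 1,
          ((1 - u : ℝ) : ℂ) ^ (-(Complex.I * t) / β) *
            ((u ^ (α - 1) * Real.exp (-lam * u ^ α) : ℝ) : ℂ) := by
  have hder : ∀ x ∈ Set.Ioi (0 : ℝ),
      HasDerivWithinAt (fun x : ℝ => 1 - Real.exp (-β * x)) (β * Real.exp (-β * x))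
        (Set.Ioi 0) x := by
    intro x _
    have h := (((hasDerivAt_id x).const_mul (-β)).exp.const_sub 1).hasDerivWithinAt
      (s := Set.Ioi (0 : ℝ))
    refine h.congr_deriv ?_
    simp only [id]
    ring
  have hinj : Set.InjOn (fun x : ℝ => 1 - Real.exp (-β * x)) (Set.Ioi 0) := by
    intro x _ y _ hxy
    have h : Real.exp (-β * x) = Real.exp (-β * y) := by
      simp only at hxy
      linarith
    exact mul_left_cancel₀ (neg_ne_zero.mpr hβ.ne') (Real.exp_injective h)
  rw [← eep_image_Ioi hβ, integral_image_eq_integral_abs_deriv_smul measurableSet_Ioi hder hinj,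
    ← integral_const_mul]
  refine setIntegral_congr_fun measurableSet_Ioi fun x hx => ?_
  have hpos : 0 < β * Real.exp (-β * x) := mul_pos hβ (Real.exp_pos _)
  have hβc : (β : ℂ) ≠ 0 := Complex.ofReal_ne_zero.mpr hβ.ne'
  have hpow : ((1 - (1 - Real.exp (-β * x)) : ℝ) : ℂ) ^ (-(Complex.I * t) / β) =
      Complex.exp (Complex.I * t * x) := by
    rw [sub_sub_cancel, Complex.cpow_def_of_ne_zero
      (Complex.ofReal_ne_zero.mpr (Real.exp_pos _).ne'), ← Complex.ofReal_log (Real.exp_pos _).le,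
      Real.log_exp]
    congr 1
    push_cast
    field_simp
  simp only [hpow, abs_of_pos hpos, eepPdf, if_pos (Set.mem_Ioi.mp hx), Complex.real_smul]
  push_cast
  ring
end

section
/- Let α, β, λ > 0 and let f be the EEP(α,β,λ) density. Then for every real ν > 1 − α, the function x ↦ x^ν f(x) is integrable on (0,∞); in particular the EEP(α,β,λ) distribution possesses finite moments of every real order ν ∈ (1−α, ∞), including negative orders when α > 1. -/
/-!
On `(0, ∞)` put `t = β x` and `y = 1 - e^{-t}`, so that `t e^{-t} ≤ y ≤ t`. The upper bound
(if `1 ≤ α`) or the lower bound (if `α ≤ 1`) gives `e^{-t} y^{α-1} ≤ t^{α-1} e^{-ct}` with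
`c = min α 1 > 0`. The last factor `e^{-λ y^α}` of the density is at most `1`, so `x^ν f(x)` is
dominated by a constant times `x^{ν+α-1} e^{-cβx}`, a Gamma-type integrand with exponent
`ν + α - 1 > 0`.
-/

open Real MeasureTheory Set

lemma mul_exp_neg_le_one_sub_exp_neg (t : ℝ) : t * exp (-t) ≤ 1 - exp (-t) := by
  have h : (t + 1) * exp (-t) ≤ exp t * exp (-t) :=
    mul_le_mul_of_nonneg_right (add_one_le_exp t) (exp_pos _).le
  rw [← exp_add, add_neg_cancel, exp_zero] at h
  linarith

lemma exp_neg_mul_one_sub_exp_neg_rpow_le (α : ℝ) {t : ℝ} (ht : 0 < t) :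
    exp (-t) * (1 - exp (-t)) ^ (α - 1) ≤ t ^ (α - 1) * exp (-(min α 1 * t)) := by
  have hpos : 0 < t * exp (-t) := by positivity
  have hlow := mul_exp_neg_le_one_sub_exp_neg t
  have hup : 1 - exp (-t) ≤ t := by linarith [add_one_le_exp (-t)]
  rcases le_total 1 α with h | h
  · rw [min_eq_right h, one_mul, mul_comm]
    gcongr
    · linarith
  · rw [min_eq_left h]
    calc exp (-t) * (1 - exp (-t)) ^ (α - 1)
        ≤ exp (-t) * (t * exp (-t)) ^ (α - 1) := by
          gcongr ?_ * ?_
          exact rpow_le_rpow_of_nonpos hpos hlow (by linarith)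
      _ = t ^ (α - 1) * exp (-(α * t)) := by
          rw [mul_rpow ht.le (exp_pos _).le, ← exp_mul, mul_left_comm, ← exp_add]
          ring_nf

theorem eep_real_order_moment_finite (α β lam : ℝ)
    (hα : 0 < α) (hβ : 0 < β) (hlam : 0 < lam)
    (ν : ℝ) (hν : 1 - α < ν) :
    MeasureTheory.IntegrableOn (fun x : ℝ => x ^ ν * eepPdf α β lam x) (Set.Ioi 0) := by
  have hK : 0 < α * β * lam / (1 - exp (-lam)) := by
    have : exp (-lam) < 1 := exp_lt_one_iff.2 (by linarith)
    have : 0 < 1 - exp (-lam) := by linarith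
    positivity
  have hint : IntegrableOn (fun x : ℝ => (α * β * lam / (1 - exp (-lam)) * β ^ (α - 1)) *
      (x ^ (ν + (α - 1)) * exp (-(min α 1 * β) * x))) (Ioi 0) := by
    have h := integrableOn_rpow_mul_exp_neg_mul_rpow (s := ν + (α - 1)) (p := 1)
      (b := min α 1 * β) (by linarith) one_pos (mul_pos (lt_min hα one_pos) hβ)
    simp only [rpow_one] at h
    exact h.const_mul _
  refine Integrable.mono' hint ?_ ?_
  · have : Measurable (eepPdf α β lam) := by
      unfold eepPdf
      exact Measurable.ite measurableSet_Ioi (by fun_prop) measurable_const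
    exact Measurable.aestronglyMeasurable (by fun_prop)
  · refine (ae_restrict_iff' measurableSet_Ioi).2 (ae_of_all _ fun x hx => ?_)
    have hx : 0 < x := hx
    have ht : 0 < β * x := mul_pos hβ hx
    have hy : 0 ≤ 1 - exp (-(β * x)) := by
      linarith [exp_le_one_iff.2 (show -(β * x) ≤ 0 by linarith)]
    simp only [eepPdf, if_pos hx, neg_mul β x]
    generalize α * β * lam / (1 - exp (-lam)) = K at hK ⊢
    rw [norm_of_nonneg (by positivity)]
    have hE : exp (-lam * (1 - exp (-(β * x))) ^ α) ≤ 1 := by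
      have : 0 ≤ lam * (1 - exp (-(β * x))) ^ α := by positivity
      exact exp_le_one_iff.2 (by linarith)
    calc x ^ ν * (K * exp (-(β * x)) * (1 - exp (-(β * x))) ^ (α - 1) *
          exp (-lam * (1 - exp (-(β * x))) ^ α))
        ≤ x ^ ν * (K * exp (-(β * x)) * (1 - exp (-(β * x))) ^ (α - 1) * 1) := by gcongr
      _ = x ^ ν * K * (exp (-(β * x)) * (1 - exp (-(β * x))) ^ (α - 1)) := by ring
      _ ≤ x ^ ν * K * ((β * x) ^ (α - 1) * exp (-(min α 1 * (β * x)))) := by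
          gcongr ?_ * ?_
          exact exp_neg_mul_one_sub_exp_neg_rpow_le α ht
      _ = K * β ^ (α - 1) * (x ^ (ν + (α - 1)) * exp (-(min α 1 * β) * x)) := by
          rw [mul_rpow hβ.le hx.le, rpow_add hx, neg_mul, mul_assoc (min α 1)]
          ring
end

section
/- Let a > 0, s > 0, 0 ≤ z < 1 and μ a real number (with s − μ > 1 additionally required when z = 1; for 0 ≤ z < 1 no extra condition). Then the Goyal–Laddha generalized Hurwitz–Lerch Zeta function admits the integral representation Σ_{n=0}^∞ ((μ)_n/n!) · z^n/(n+a)^s = (1/Γ(s)) · ∫₀^∞ t^{s−1} e^{−at} (1 − z e^{−t})^{−μ} dt, where (μ)_n denotes the Pochhammer symbol and Γ the real Gamma function. -/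
/-!
The identity is obtained by expanding `(1 - z e^{-t})^{-μ}` in its binomial series
`∑ (μ)_n / n! * z^n e^{-nt}`, valid for every `t > 0`, and integrating term by term against
`t^{s-1} e^{-at}`: each term is the Gamma integral `∫ t^{s-1} e^{-(n+a)t} dt = Γ(s) / (n+a)^s`
(`gamma_term`).

Since these integrands have constant sign in `t`, the interchange only requires absolute convergence
of the series itself (`summable_abs_term`). For `z < 1` that is the absolute convergence of the
binomial series inside its disc. For `z = 1` it follows from Euler's limit formula for `Γ(μ)`, which
gives `(μ)_n / n! = O(n^{μ-1})` (`abs_coeff_le`), so that the terms are `O(n^{μ-1-s})`. At the poles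
of `Γ`, where Euler's formula says nothing, `(μ)_n` vanishes for large `n`.
-/

open Real MeasureTheory Set

/-- The Pochhammer symbol (μ)_n = μ(μ+1)⋯(μ+n−1) over the reals. -/
noncomputable def poch (μ : ℝ) (n : ℕ) : ℝ :=
  Polynomial.eval μ (ascPochhammer ℝ n)

lemma poch_succ (μ : ℝ) (n : ℕ) : poch μ (n + 1) = poch μ n * (μ + n) := by
  simp [poch, ascPochhammer_succ_eval]

lemma poch_eq_prod (μ : ℝ) (n : ℕ) : poch μ n = ∏ j ∈ Finset.range n, (μ + j) := by
  induction n with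
  | zero => simp [poch]
  | succ n ih => rw [poch_succ, ih, Finset.prod_range_succ]

lemma choose_eq_poch (μ : ℝ) (n : ℕ) :
    Ring.choose (μ + n - 1) n = poch μ n / (n.factorial : ℝ) := by
  rw [← Ring.multichoose_eq, eq_div_iff (by positivity), mul_comm, ← nsmul_eq_mul,
    Ring.factorial_nsmul_multichoose_eq_ascPochhammer, poch, Polynomial.ascPochhammer_smeval_eq_eval]

lemma summable_abs_binomial (μ : ℝ) {x : ℝ} (hx : |x| < 1) :
    Summable fun n : ℕ ↦ |poch μ n / (n.factorial : ℝ) * x ^ n| := by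
  have h := one_div_one_sub_rpow_hasFPowerSeriesOnBall_zero μ
  have hx' : x ∈ Metric.eball (0 : ℝ) 1 := by
    simpa [enorm_eq_nnnorm, ← NNReal.coe_lt_coe] using hx
  have := FormalMultilinearSeries.summable_norm_apply _ (Metric.eball_subset_eball h.r_le hx')
  simpa [choose_eq_poch, abs_div, mul_comm, FormalMultilinearSeries.ofScalars_apply_eq] using this

lemma hasSum_binomial (μ : ℝ) {x : ℝ} (hx : |x| < 1) :
    HasSum (fun n : ℕ ↦ poch μ n / (n.factorial : ℝ) * x ^ n) ((1 - x) ^ (-μ)) := by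
  have h := one_div_one_sub_rpow_hasFPowerSeriesOnBall_zero μ
  have hx' : x ∈ Metric.eball (0 : ℝ) 1 := by
    simpa [enorm_eq_nnnorm, ← NNReal.coe_lt_coe] using hx
  have := h.hasSum hx'
  rw [rpow_neg (by linarith [(abs_lt.mp hx).2])]
  simpa [choose_eq_poch, mul_comm, FormalMultilinearSeries.ofScalars_apply_eq] using this

/-- The growth `(μ)_{n+1} / (n+1)! = O(n^{μ-1})`, with the factor `n^{-1}` kept as `(n+1)^{-1}`.
Dividing `n^μ / (n+1)` by `(μ)_{n+1} / (n+1)!` gives exactly Euler's sequence converging to `Γ(μ)`. -/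
lemma abs_coeff_le (μ : ℝ) : ∃ C : ℝ, ∀ᶠ n : ℕ in Filter.atTop,
    |poch μ (n + 1) / ((n + 1).factorial : ℝ)| ≤ C * ((n : ℝ) ^ μ / (n + 1)) := by
  by_cases hμ : ∃ m : ℕ, μ = -m
  · obtain ⟨m, rfl⟩ := hμ
    refine ⟨0, Filter.eventually_atTop.mpr ⟨m, fun n hn ↦ ?_⟩⟩
    rw [poch_eq_prod, Finset.prod_eq_zero (i := m) (Finset.mem_range.mpr (by omega)) (by simp)]
    simp
  · push Not at hμ
    have hlim := ((GammaSeq_tendsto_Gamma μ).inv₀ (Gamma_ne_zero hμ)).abs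
    refine ⟨|(Gamma μ)⁻¹| + 1, ?_⟩
    filter_upwards [hlim.eventually_lt_const (lt_add_one _), Filter.eventually_gt_atTop 0]
      with n hn hn0
    have hnp : (0 : ℝ) < n := by exact_mod_cast hn0
    have hp : (0 : ℝ) < (n : ℝ) ^ μ := rpow_pos_of_pos hnp _
    have key : poch μ (n + 1) / ((n + 1).factorial : ℝ)
        = (GammaSeq μ n)⁻¹ * ((n : ℝ) ^ μ / (n + 1)) := by
      rw [GammaSeq, ← poch_eq_prod, Nat.factorial_succ]
      push_cast
      have := Nat.factorial_pos n
      field_simp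
    rw [key, abs_mul, abs_of_pos (show 0 < (n : ℝ) ^ μ / (n + 1) by positivity)]
    gcongr

lemma summable_abs_term (μ a s z : ℝ)
    (ha : 0 < a) (hs : 0 < s) (hz0 : 0 ≤ z) (hz1 : z ≤ 1)
    (hcond : z = 1 → 1 < s - μ) :
    Summable fun n : ℕ ↦ |poch μ n / (n.factorial : ℝ) * z ^ n| / ((n : ℝ) + a) ^ s := by
  rcases hz1.lt_or_eq with h | rfl
  · refine Summable.of_nonneg_of_le (fun n ↦ by positivity) (fun n ↦ ?_)
      ((summable_abs_binomial μ (by rwa [abs_of_nonneg hz0])).div_const (a ^ s))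
    gcongr
    linarith [(Nat.cast_nonneg n : (0 : ℝ) ≤ n)]
  · have hc := hcond rfl
    rw [← summable_nat_add_iff 1]
    obtain ⟨C, hC⟩ := abs_coeff_le μ
    refine Summable.of_norm_bounded_eventually_nat (g := fun n : ℕ ↦ |C| * (n : ℝ) ^ (μ - 1 - s))
      ((summable_nat_rpow.mpr (by linarith)).mul_left _) ?_
    filter_upwards [hC, Filter.eventually_gt_atTop 0] with n hn hn0
    have hnp : (0 : ℝ) < n := by exact_mod_cast hn0
    rw [norm_of_nonneg (by positivity), one_pow, mul_one, rpow_sub hnp, rpow_sub hnp, rpow_one,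
      ← mul_div_assoc]
    have h1 : C * ((n : ℝ) ^ μ / (n + 1)) ≤ |C| * ((n : ℝ) ^ μ / n) := by
      gcongr
      · exact le_abs_self C
      · linarith
    have h2 : (n : ℝ) ≤ ((n + 1 : ℕ) : ℝ) + a := by push_cast; linarith
    have h3 : (0 : ℝ) < (n : ℝ) ^ s := rpow_pos_of_pos hnp _
    exact div_le_div₀ (by positivity) (hn.trans h1) h3 (rpow_le_rpow hnp.le h2 hs.le)

lemma gamma_term {b s : ℝ} (hb : 0 < b) (hs : 0 < s) :
    ∫ t in Ioi (0 : ℝ), t ^ (s - 1) * exp (-b * t) = Gamma s / b ^ s := by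
  simp_rw [neg_mul]
  rw [integral_rpow_mul_exp_neg_mul_Ioi hs hb, one_div, inv_rpow hb.le, inv_mul_eq_div]

theorem goyal_laddha_hlz_integral_rep (μ a s z : ℝ)
    (ha : 0 < a) (hs : 0 < s) (hz0 : 0 ≤ z) (hz1 : z ≤ 1)
    (hcond : z = 1 → 1 < s - μ) :
    ∑' n : ℕ, poch μ n / (n.factorial : ℝ) * z ^ n / ((n : ℝ) + a) ^ s =
      (1 / Real.Gamma s) *
        ∫ t in Set.Ioi (0 : ℝ),
          t ^ (s - 1) * Real.exp (-a * t) * (1 - z * Real.exp (-t)) ^ (-μ) := by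
  have hG : 0 < Gamma s := Gamma_pos_of_pos hs
  have hb (n : ℕ) : 0 < (n : ℝ) + a := by positivity
  set c : ℕ → ℝ := fun n ↦ poch μ n / (n.factorial : ℝ) * z ^ n with hc
  let F : ℕ → ℝ → ℝ := fun n t ↦ c n * (t ^ (s - 1) * exp (-((n : ℝ) + a) * t))
  have hF_int (n : ℕ) : Integrable (F n) (volume.restrict (Ioi 0)) := by
    have := integrableOn_rpow_mul_exp_neg_mul_rpow (p := 1) (s := s - 1) (by linarith) one_pos (hb n)
    simp only [rpow_one] at this
    exact Integrable.const_mul this _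
  have hF_norm (n : ℕ) : ∫ t in Ioi (0 : ℝ), ‖F n t‖ = Gamma s * (|c n| / ((n : ℝ) + a) ^ s) := by
    have : ∫ t in Ioi (0 : ℝ), ‖F n t‖
        = ∫ t in Ioi (0 : ℝ), |c n| * (t ^ (s - 1) * exp (-((n : ℝ) + a) * t)) := by
      refine setIntegral_congr_fun measurableSet_Ioi fun t ht ↦ ?_
      have ht' : (0 : ℝ) < t := ht
      simp only [F, norm_eq_abs]
      rw [abs_mul, abs_of_nonneg (a := t ^ (s - 1) * _) (by positivity)]
    rw [this, integral_const_mul, gamma_term (hb n) hs]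
    ring
  have hF_sum : Summable fun n ↦ ∫ t in Ioi (0 : ℝ), ‖F n t‖ := by
    simp_rw [hF_norm]
    exact (summable_abs_term μ a s z ha hs hz0 hz1 hcond).mul_left _
  have hsum := (hasSum_integral_of_summable_integral_norm hF_int hF_sum).tsum_eq
  have hF_tsum : ∫ t in Ioi (0 : ℝ), (∑' n, F n t)
      = ∫ t in Ioi (0 : ℝ), t ^ (s - 1) * exp (-a * t) * (1 - z * exp (-t)) ^ (-μ) := by
    refine setIntegral_congr_fun measurableSet_Ioi fun t ht ↦ ?_
    have ht' : (0 : ℝ) < t := ht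
    have hx : |z * exp (-t)| < 1 := by
      rw [abs_of_nonneg (by positivity)]
      have : exp (-t) < 1 := exp_lt_one_iff.mpr (by linarith)
      nlinarith [exp_pos (-t)]
    have := (hasSum_binomial μ hx).mul_left (t ^ (s - 1) * exp (-a * t))
    rw [← this.tsum_eq]
    refine tsum_congr fun n ↦ ?_
    have he : exp (-((n : ℝ) + a) * t) = exp (-a * t) * exp (-t) ^ n := by
      rw [← exp_nat_mul, ← exp_add]
      ring_nf
    simp only [F, hc]
    rw [he, mul_pow]
    ring
  rw [← hF_tsum, ← hsum, ← tsum_mul_left]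
  refine tsum_congr fun n ↦ ?_
  simp only [F, hc]
  rw [integral_const_mul, gamma_term (hb n) hs]
  field_simp
end
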